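/- Let X be a compact forward invariant set (g(X) ⊂ X) with P_g ⊂ X, and define X_* = {x ∈ hull(X) : GO(x) ⊂ hull(X)}. Then X_* is the maximal (possibly empty) compact set with g⁻¹(X_*) = X_* which is contained in hull(X); furthermore, X_* is a full compact set. -/

import Mathlib

open Set Function Metric Topology Filter

noncomputable section

/-- A topological disk: a (nonempty, connected) simply connected planar domain. -/
def IsTopDisk (V : Set ℂ) : Prop :=
  IsOpen V ∧ IsConnected V ∧ SimplyConnectedSpace V

/-- Critical points of `g` lying in `U'`. -/
def critPts (g : ℂ → ℂ) (U' : Set ℂ) : Set ℂ := {z | z ∈ U' ∧ deriv g z = 0}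

/-- The postcritical set of `g : U' → U`. -/
def postCrit (g : ℂ → ℂ) (U' : Set ℂ) : Set ℂ :=
  closure (⋃ n : ℕ, g^[n] '' critPts g U')

/-- `g : U' → U` is a proper map: preimages of compact subsets of `U` are compact. -/
def ProperOn (g : ℂ → ℂ) (U' U : Set ℂ) : Prop :=
  ∀ K : Set ℂ, K ⊆ U → IsCompact K → IsCompact (U' ∩ g ⁻¹' K)

/-- `g : U' → U` has degree `d`: every point of `U` has a preimage, and every point of `U`
which is not a critical value has exactly `d` preimages in `U'`. -/
def HasDeg (g : ℂ → ℂ) (U' U : Set ℂ) (d : ℕ) : Prop :=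
  (∀ w ∈ U, (U' ∩ g ⁻¹' {w}).Nonempty) ∧
  ∀ w ∈ U, w ∉ g '' critPts g U' → (U' ∩ g ⁻¹' {w}).ncard = d

/-- Standing assumptions: `U' ⊆ U` are simply connected domains in `ℂ` with `U' ≠ U`,
`g : U' → U` is a proper holomorphic map of degree `d ≥ 2`, all forward iterates of the
critical points are defined, the postcritical set is a compact subset of `U'`, and if the
postcritical set is a singleton `{c}` then `g⁻¹(c) ≠ {c}`. -/
structure PLSetting (g : ℂ → ℂ) (U' U : Set ℂ) (d : ℕ) : Prop where
  disk' : IsTopDisk U'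
  disk : IsTopDisk U
  subset : U' ⊆ U
  ne : U' ≠ U
  two_le_d : 2 ≤ d
  holo : DifferentiableOn ℂ g U'
  mapsTo : MapsTo g U' U
  proper : ProperOn g U' U
  deg : HasDeg g U' U d
  crit_orbit : ∀ c ∈ critPts g U', ∀ n : ℕ, g^[n] c ∈ U'
  postCrit_compact : IsCompact (postCrit g U')
  postCrit_subset : postCrit g U' ⊆ U'
  postCrit_singleton : ∀ c : ℂ, postCrit g U' = {c} → U' ∩ g ⁻¹' {c} ≠ {c}

/-- The topological hull of `X`: the complement of the unbounded component of `ℂ \ X`. -/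
def topHull (X : Set ℂ) : Set ℂ :=
  {z | Bornology.IsBounded (connectedComponentIn Xᶜ z)}

/-- The grand orbit of `x`: points `z` (with iterates defined) such that
`g^m(z) = g^n(x)` for some `m, n ≥ 0`. -/
def grandOrbit (g : ℂ → ℂ) (U' : Set ℂ) (x : ℂ) : Set ℂ :=
  {z | ∃ m n : ℕ, (∀ k < m, g^[k] z ∈ U') ∧ g^[m] z = g^[n] x}

/-! ### Topological hulls -/

lemma isPreconnected_exterior {R : ℝ} (hR : 0 < R) : IsPreconnected {z : ℂ | R < ‖z‖} := by
  have h : {z : ℂ | R < ‖z‖} = Complex.exp '' {z : ℂ | Real.log R < z.re} := by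
    ext z
    constructor
    · intro hz
      have hz : R < ‖z‖ := hz
      have hz0 : z ≠ 0 := by
        rintro rfl
        simp at hz
        linarith
      refine ⟨Complex.log z, ?_, Complex.exp_log hz0⟩
      show Real.log R < (Complex.log z).re
      rw [Complex.log_re]
      exact Real.log_lt_log hR hz
    · rintro ⟨w, hw, rfl⟩
      have hw : Real.log R < w.re := hw
      show R < ‖Complex.exp w‖
      rw [Complex.norm_exp]
      exact (Real.log_lt_iff_lt_exp hR).1 hw
  rw [h]
  refine IsPreconnected.image ?_ _ Complex.continuous_exp.continuousOn
  exact (convex_halfSpace_re_gt _).isPreconnected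

lemma not_bounded_exterior (R : ℝ) : ¬ Bornology.IsBounded {z : ℂ | R < ‖z‖} := by
  intro h
  obtain ⟨C, hC⟩ := h.exists_norm_le
  have := hC ((|R| + |C| + 1 : ℝ) : ℂ) (by
    show R < ‖((|R| + |C| + 1 : ℝ) : ℂ)‖
    rw [Complex.norm_real, Real.norm_of_nonneg (by positivity)]
    linarith [le_abs_self R, abs_nonneg C])
  rw [Complex.norm_real, Real.norm_of_nonneg (by positivity)] at this
  linarith [le_abs_self C, abs_nonneg R]

lemma subset_topHull (A : Set ℂ) : A ⊆ topHull A := by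
  intro z hz
  show Bornology.IsBounded (connectedComponentIn Aᶜ z)
  rw [connectedComponentIn_eq_empty (by simpa using hz)]
  exact Bornology.isBounded_empty

/-- A bounded set whose frontier lies in `A` lies in the hull of `A`. -/
lemma subset_topHull_of_frontier {A V : Set ℂ} (hV : Bornology.IsBounded V)
    (hf : frontier V ⊆ A) : V ⊆ topHull A := by
  intro z hz
  by_cases hzA : z ∈ A
  · exact subset_topHull A hzA
  have hsub : connectedComponentIn Aᶜ z ⊆ interior V := by
    refine isPreconnected_connectedComponentIn.subset_left_of_subset_union
      isOpen_interior (isClosed_closure (s := V)).isOpen_compl ?_ ?_ ?_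
    · exact disjoint_compl_right.mono_left (interior_subset.trans subset_closure)
    · intro w hw
      have hwA : w ∉ A := connectedComponentIn_subset _ _ hw
      by_cases h1 : w ∈ interior V
      · exact Or.inl h1
      · exact Or.inr fun h2 => hwA (hf ⟨h2, h1⟩)
    · refine ⟨z, mem_connectedComponentIn hzA, ?_⟩
      by_contra h1
      exact hzA (hf ⟨subset_closure hz, h1⟩)
  exact hV.subset (hsub.trans interior_subset)

lemma exists_exterior {A : Set ℂ} (hA : IsCompact A) :
    ∃ R : ℝ, 0 < R ∧ {z : ℂ | R < ‖z‖} ⊆ (topHull A)ᶜ ∧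
      ∀ z ∈ (topHull A)ᶜ, {z : ℂ | R < ‖z‖} ⊆ connectedComponentIn Aᶜ z := by
  obtain ⟨C, hC⟩ := hA.isBounded.exists_norm_le
  have hsub : {z : ℂ | |C| + 1 < ‖z‖} ⊆ Aᶜ := by
    intro z hz hzA
    have hz : |C| + 1 < ‖z‖ := hz
    linarith [hC z hzA, le_abs_self C]
  have hR : 0 < |C| + 1 := by positivity
  refine ⟨|C| + 1, hR, ?_, ?_⟩
  · intro z hz hb
    exact not_bounded_exterior _
      (Bornology.IsBounded.subset hb
        ((isPreconnected_exterior hR).subset_connectedComponentIn hz hsub))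
  · intro z hz
    have : ∃ w ∈ connectedComponentIn Aᶜ z, |C| + 1 < ‖w‖ := by
      by_contra! hcon
      exact hz (isBounded_iff_forall_norm_le.2 ⟨_, hcon⟩)
    obtain ⟨w, hw, hw'⟩ := this
    rw [connectedComponentIn_eq hw]
    exact (isPreconnected_exterior hR).subset_connectedComponentIn hw' hsub

lemma component_subset_compl_topHull {A : Set ℂ} {z : ℂ} (hz : z ∉ topHull A) :
    connectedComponentIn Aᶜ z ⊆ (topHull A)ᶜ := by
  intro w hw hb
  apply hz
  have hb : Bornology.IsBounded (connectedComponentIn Aᶜ w) := hb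
  rwa [← connectedComponentIn_eq hw] at hb

lemma isConnected_compl_topHull {A : Set ℂ} (hA : IsCompact A) :
    IsConnected (topHull A)ᶜ := by
  obtain ⟨R, hR, h1, h2⟩ := exists_exterior hA
  have hne : ((R + 1 : ℝ) : ℂ) ∈ {z : ℂ | R < ‖z‖} := by
    show R < ‖((R + 1 : ℝ) : ℂ)‖
    rw [Complex.norm_real, Real.norm_of_nonneg (by positivity)]
    linarith
  have heq : (topHull A)ᶜ = connectedComponentIn Aᶜ ((R + 1 : ℝ) : ℂ) := by
    refine Subset.antisymm ?_ (component_subset_compl_topHull (h1 hne))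
    intro z hz
    rw [← connectedComponentIn_eq (h2 z hz hne)]
    exact mem_connectedComponentIn fun hzA => hz (subset_topHull A hzA)
  refine ⟨⟨_, h1 hne⟩, ?_⟩
  rw [heq]
  exact isPreconnected_connectedComponentIn

lemma isOpen_compl_topHull {A : Set ℂ} (hA : IsClosed A) : IsOpen (topHull A)ᶜ := by
  rw [isOpen_iff_mem_nhds]
  intro z hz
  refine mem_of_superset ?_ (component_subset_compl_topHull hz)
  exact hA.isOpen_compl.connectedComponentIn.mem_nhds
    (mem_connectedComponentIn fun hzA => hz (subset_topHull A hzA))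

lemma isCompact_topHull {A : Set ℂ} (hA : IsCompact A) : IsCompact (topHull A) := by
  refine isCompact_of_isClosed_isBounded
    (isOpen_compl_iff.1 (isOpen_compl_topHull hA.isClosed)) ?_
  obtain ⟨R, hR, h1, -⟩ := exists_exterior hA
  refine isBounded_iff_forall_norm_le.2 ⟨R, fun z hz => ?_⟩
  by_contra! hlt
  exact h1 hlt hz

lemma isOpen_topHull_diff {A : Set ℂ} (hA : IsClosed A) : IsOpen (topHull A \ A) := by
  rw [isOpen_iff_mem_nhds]
  rintro z ⟨hz, hzA⟩
  refine mem_of_superset (hA.isOpen_compl.connectedComponentIn.mem_nhds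
    (mem_connectedComponentIn hzA)) ?_
  intro w hw
  refine ⟨?_, connectedComponentIn_subset _ _ hw⟩
  have hz : Bornology.IsBounded (connectedComponentIn Aᶜ z) := hz
  show Bornology.IsBounded (connectedComponentIn Aᶜ w)
  rwa [← connectedComponentIn_eq hw]

lemma frontier_topHull {A : Set ℂ} (hA : IsCompact A) : frontier (topHull A) ⊆ A := by
  rintro z ⟨h1, h2⟩
  rw [(isCompact_topHull hA).isClosed.closure_eq] at h1
  by_contra hzA
  exact h2 (mem_interior.2 ⟨_, sdiff_subset, isOpen_topHull_diff hA.isClosed, h1, hzA⟩)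

lemma topHull_subset_topHull {A B : Set ℂ} (hB : IsCompact B) (hAB : A ⊆ topHull B) :
    topHull A ⊆ topHull B := by
  intro z hz
  by_contra hzB
  obtain ⟨R, hR, h1, -⟩ := exists_exterior hB
  have := (isConnected_compl_topHull hB).isPreconnected.subset_connectedComponentIn hzB
    (compl_subset_compl.2 hAB)
  exact not_bounded_exterior R (Bornology.IsBounded.subset hz (h1.trans this))

/-- There is no continuous logarithm of `z - p` on a circle around `p`. -/
lemma no_log_on_circle (p : ℂ) {R : ℝ} (L : ℂ → ℂ) (hL : Continuous L)
    (h : ∀ z, ‖z - p‖ = R → Complex.exp (L z) = z - p) (hR : 0 < R) : False := by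
  set c : ℝ → ℂ := fun t => p + R * Complex.exp (t * Complex.I) with hc
  have hcn : ∀ t, ‖c t - p‖ = R := by
    intro t
    simp [hc, Complex.norm_exp_ofReal_mul_I, abs_of_pos hR]
  have hcc : Continuous c := by fun_prop
  have hc0 : c 0 = p + R := by simp [hc]
  have key : (fun t : ℝ => L (c t)) = fun t : ℝ => L (c 0) + t * Complex.I := by
    refine Complex.isCoveringMap_exp.eq_of_comp_eq (hL.comp hcc) (by fun_prop) ?_ 0 (by simp)
    funext t
    apply Subtype.ext
    show Complex.exp (L (c t)) = Complex.exp (L (c 0) + t * Complex.I)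
    rw [Complex.exp_add, h _ (hcn t), h _ (hcn 0)]
    simp [hc]
  have h2 := congrFun key (2 * Real.pi)
  have hper : c (2 * Real.pi) = c 0 := by
    simp [hc, Complex.exp_two_pi_mul_I]
  simp only [hper] at h2
  have : (((2 * Real.pi : ℝ) : ℂ)) * Complex.I = 0 := by
    linear_combination -h2
  simp [Real.pi_ne_zero] at this

/-- The hull of a compact subset of a simply connected planar domain stays in the domain. -/
lemma topHull_subset_disk {V X : Set ℂ} (hV : IsTopDisk V) (hX : IsCompact X) (hXV : X ⊆ V) :
    topHull X ⊆ V := by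
  classical
  intro p hp
  by_contra hpV
  obtain ⟨h, hc, he⟩ := Complex.exists_continuousOn_eqOn_exp_comp (U := V)
    (show IsSimplyConnected V from hV.2.2) hV.1 (g := fun z => z - p) (by fun_prop)
    (by
      rintro ⟨z, hz, hz0⟩
      have : z = p := sub_eq_zero.1 hz0
      exact hpV (this ▸ hz))
  obtain ⟨k, hk⟩ := ContinuousMap.exists_restrict_eq hX.isClosed
    (⟨X.domRestrict h, continuousOn_iff_continuous_domRestrict.1 (hc.mono hXV)⟩ : C(X, ℂ))
  have hkX : ∀ z ∈ X, Complex.exp (k z) = z - p := by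
    intro z hz
    have h1 : k z = h z := congrArg (fun f : C(X, ℂ) => f ⟨z, hz⟩) hk
    rw [h1]
    exact he (hXV hz)
  have hFc : Continuous (fun z => if z ∈ topHull X then Complex.exp (k z) else z - p) := by
    refine Continuous.if ?_ (by fun_prop) (by fun_prop)
    intro z hz
    exact hkX z (frontier_topHull hX hz)
  obtain ⟨L, hLc, hLe⟩ := Complex.exists_continuousOn_eqOn_exp_comp (U := (univ : Set ℂ))
    (show IsSimplyConnected (univ : Set ℂ) from
      (Homeomorph.Set.univ ℂ).toHomotopyEquiv.simplyConnectedSpace) isOpen_univ hFc.continuousOn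
    (by
      rintro ⟨z, -, hz0⟩
      by_cases hz : z ∈ topHull X
      · simp only [hz, if_true] at hz0
        exact Complex.exp_ne_zero _ hz0
      · simp only [hz, if_false] at hz0
        have : z = p := sub_eq_zero.1 hz0
        exact hz (this ▸ hp))
  obtain ⟨R, hR, hR1, -⟩ := exists_exterior hX
  refine no_log_on_circle p (R := R + ‖p‖ + 1) L (continuousOn_univ.1 hLc) ?_ (by positivity)
  intro z hz
  have hzR : z ∉ topHull X := by
    apply hR1
    show R < ‖z‖
    have := norm_sub_le z p
    linarith
  have := hLe (mem_univ z)
  simpa [hzR] using this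

/-! ### The dynamics -/

lemma PLSetting.isOpen_image {g : ℂ → ℂ} {U' U : Set ℂ} {d : ℕ} (H : PLSetting g U' U d) :
    ∀ s ⊆ U', IsOpen s → IsOpen (g '' s) := by
  have han : AnalyticOnNhd ℂ g U' := H.holo.analyticOnNhd H.disk'.1
  refine (han.is_constant_or_isOpen H.disk'.2.1.isPreconnected).resolve_left ?_
  rintro ⟨w, hw⟩
  have hU : U ⊆ {w} := by
    intro y hy
    obtain ⟨z, hz, hzy⟩ := H.deg.1 y hy
    have hzy : g z = y := hzy
    show y = w
    rw [← hzy, hw z hz]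
  obtain ⟨y, hy⟩ := H.disk.2.1.nonempty
  have hyw : U = {w} := Subset.antisymm hU (by
    have := hU hy
    rintro _ rfl
    exact (show y = _ from this) ▸ hy)
  have := H.disk.1
  rw [hyw] at this
  exact not_isOpen_singleton w this

lemma PLSetting.continuousAt {g : ℂ → ℂ} {U' U : Set ℂ} {d : ℕ} (H : PLSetting g U' U d)
    {z : ℂ} (hz : z ∈ U') : ContinuousAt g z :=
  H.holo.continuousOn.continuousAt (H.disk'.1.mem_nhds hz)

lemma PLSetting.nhds_le_map {g : ℂ → ℂ} {U' U : Set ℂ} {d : ℕ} (H : PLSetting g U' U d)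
    {z : ℂ} (hz : z ∈ U') : 𝓝 (g z) ≤ map g (𝓝 z) := by
  intro s hs
  obtain ⟨t, hts, hto, hzt⟩ := _root_.mem_nhds_iff.1 (mem_map.1 hs)
  refine mem_of_superset ((H.isOpen_image (t ∩ U') inter_subset_right
    (hto.inter H.disk'.1)).mem_nhds ⟨z, ⟨hzt, hz⟩, rfl⟩) ?_
  rintro _ ⟨w, hw, rfl⟩
  exact hts hw.1

lemma PLSetting.iterate_local {g : ℂ → ℂ} {U' U : Set ℂ} {d : ℕ} (H : PLSetting g U' U d)
    (m : ℕ) {z : ℂ} (hz : ∀ k < m, g^[k] z ∈ U') :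
    ContinuousAt g^[m] z ∧ 𝓝 (g^[m] z) ≤ map g^[m] (𝓝 z) ∧
      ∀ᶠ w in 𝓝 z, ∀ k < m, g^[k] w ∈ U' := by
  induction m with
  | zero => exact ⟨continuousAt_id, by simp, by simp⟩
  | succ m ih =>
    obtain ⟨h1, h2, h3⟩ := ih fun k hk => hz k (by omega)
    have hm := hz m (by omega)
    rw [iterate_succ']
    refine ⟨(H.continuousAt hm).comp h1, ?_, ?_⟩
    · rw [← Filter.map_map]
      exact (H.nhds_le_map hm).trans (map_mono h2)
    · filter_upwards [h3, h1 (H.disk'.1.mem_nhds hm)] with w hw hw' k hk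
      rcases Nat.lt_succ_iff_lt_or_eq.1 hk with h | rfl
      · exact hw k h
      · exact hw'

/-- **Proposition.** Let `X ⊆ U'` be a compact forward invariant set containing the
postcritical set, and let `X* = {x ∈ hull(X) : GO(x) ⊆ hull(X)}`. Then `X*` is the maximal
(possibly empty) completely invariant compact contained in `hull(X)`, and `X*` is a full
compact set. -/
theorem maximal_invariant_in_hull {g : ℂ → ℂ} {U' U : Set ℂ} {d : ℕ}
    (H : PLSetting g U' U d) {X : Set ℂ}
    (hXcomp : IsCompact X) (hXsub : X ⊆ U') (hXinv : g '' X ⊆ X)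
    (hPX : postCrit g U' ⊆ X) :
    IsCompact {x ∈ topHull X | grandOrbit g U' x ⊆ topHull X} ∧
    U' ∩ g ⁻¹' {x ∈ topHull X | grandOrbit g U' x ⊆ topHull X} =
      {x ∈ topHull X | grandOrbit g U' x ⊆ topHull X} ∧
    (∀ Y : Set ℂ, IsCompact Y → Y ⊆ topHull X → U' ∩ g ⁻¹' Y = Y →
      Y ⊆ {x ∈ topHull X | grandOrbit g U' x ⊆ topHull X}) ∧
    IsConnected {x ∈ topHull X | grandOrbit g U' x ⊆ topHull X}ᶜ := by
  set A : Set ℂ := {x ∈ topHull X | grandOrbit g U' x ⊆ topHull X} with hAdef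
  have hK : IsCompact (topHull X) := isCompact_topHull hXcomp
  have hKU : topHull X ⊆ U' := topHull_subset_disk H.disk' hXcomp hXsub
  have hAK : A ⊆ topHull X := fun x hx => hx.1
  have hAit : ∀ x ∈ A, ∀ n, g^[n] x ∈ topHull X := fun x hx n => hx.2 ⟨0, n, by simp, rfl⟩
  have hAcl : IsClosed A := by
    refine isClosed_of_closure_subset fun x hx => ?_
    have hxK : ∀ n, g^[n] x ∈ topHull X := by
      intro n
      induction n using Nat.strong_induction_on with
      | _ n ih =>
        have hc := (H.iterate_local n fun k hk => hKU (ih k hk)).1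
        have := hc.continuousWithinAt.mem_closure_image hx
        refine hK.isClosed.closure_subset_iff.2 ?_ this
        rintro _ ⟨y, hy, rfl⟩
        exact hAit y hy n
    refine ⟨hxK 0, ?_⟩
    rintro z ⟨m, n, hz, hmn⟩
    by_contra hzK
    obtain ⟨-, h2, h3⟩ := H.iterate_local m hz
    have hc := (H.iterate_local n fun k _ => hKU (hxK k)).1
    have hN : {w | w ∉ topHull X ∧ ∀ k < m, g^[k] w ∈ U'} ∈ 𝓝 z :=
      Filter.inter_mem (hK.isClosed.isOpen_compl.mem_nhds hzK) h3
    have hN2 := h2 (image_mem_map hN)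
    rw [hmn] at hN2
    obtain ⟨y, ⟨w, hw, hwy⟩, hyA⟩ := mem_closure_iff_nhds.1 hx _ (hc hN2)
    exact hw.1 (hyA.2 ⟨m, n, hw.2, hwy⟩)
  have hAc : IsCompact A := hK.of_isClosed_subset hAcl hAK
  have hAinv : U' ∩ g ⁻¹' A = A := by
    apply Subset.antisymm
    · rintro z ⟨hzU, hz⟩
      have hz : g z ∈ A := hz
      refine ⟨hz.2 ⟨1, 0, by simpa using hzU, rfl⟩, ?_⟩
      rintro w ⟨m, n, hw, hmn⟩
      refine hz.2 ⟨m + 1, n, ?_, ?_⟩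
      · cases n with
        | zero =>
          intro k hk
          rcases Nat.lt_succ_iff_lt_or_eq.1 hk with h | rfl
          · exact hw k h
          · rw [hmn]
            exact hzU
        | succ n =>
          intro k hk
          rcases Nat.lt_succ_iff_lt_or_eq.1 hk with h | rfl
          · exact hw k h
          · rw [hmn, iterate_succ_apply]
            exact hKU (hAit _ hz n)
      · rw [iterate_succ_apply', hmn, ← iterate_succ_apply' g, iterate_succ_apply]
    · intro x hx
      refine ⟨hKU hx.1, hAit x hx 1, ?_⟩
      rintro z ⟨m, n, hz, hmn⟩
      exact hx.2 ⟨m, n + 1, hz, by rw [hmn, iterate_succ_apply]⟩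
  have hmax : ∀ Y : Set ℂ, IsCompact Y → Y ⊆ topHull X → U' ∩ g ⁻¹' Y = Y → Y ⊆ A := by
    intro Y _ hYK hYinv x hx
    have hfw : ∀ n, g^[n] x ∈ Y := by
      intro n
      induction n with
      | zero => exact hx
      | succ n ih =>
        rw [iterate_succ_apply']
        rw [← hYinv] at ih
        exact ih.2
    have hbw : ∀ m z, (∀ k < m, g^[k] z ∈ U') → g^[m] z ∈ Y → z ∈ Y := by
      intro m
      induction m with
      | zero => exact fun z _ hz => hz
      | succ m ih =>
        intro z hz hzY
        refine ih z (fun k hk => hz k (by omega)) ?_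
        rw [← hYinv]
        refine ⟨hz m (by omega), ?_⟩
        rw [iterate_succ_apply'] at hzY
        exact hzY
    refine ⟨hYK hx, ?_⟩
    rintro z ⟨m, n, hz, hmn⟩
    exact hYK (hbw m z hz (hmn ▸ hfw n))
  refine ⟨hAc, hAinv, hmax, ?_⟩
  -- the hull of `A` is again completely invariant, hence equal to `A`
  have hHK : topHull A ⊆ topHull X := topHull_subset_topHull hXcomp hAK
  have hHU : topHull A ⊆ U' := hHK.trans hKU
  have hHc : IsCompact (topHull A) := isCompact_topHull hAc
  have hHo : IsOpen (topHull A \ A) := isOpen_topHull_diff hAcl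
  have hHinv : U' ∩ g ⁻¹' topHull A = topHull A := by
    apply Subset.antisymm
    · have hPc := H.proper _ (hHU.trans H.subset) hHc
      refine subset_topHull_of_frontier hPc.isBounded ?_
      rintro z ⟨h1, h2⟩
      rw [hPc.isClosed.closure_eq] at h1
      by_contra hzA
      refine h2 (mem_interior.2 ⟨U' ∩ g ⁻¹' (topHull A \ A), ?_,
        H.holo.continuousOn.isOpen_inter_preimage H.disk'.1 hHo, h1.1, h1.2, ?_⟩)
      · exact inter_subset_inter_right _ (preimage_mono sdiff_subset)
      · intro hgz
        exact hzA (hAinv ▸ (⟨h1.1, hgz⟩ : z ∈ U' ∩ g ⁻¹' A))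
    · have hic : IsCompact (g '' topHull A) :=
        hHc.image_of_continuousOn (H.holo.continuousOn.mono hHU)
      have hsub : g '' topHull A ⊆ topHull A := by
        refine subset_topHull_of_frontier hic.isBounded ?_
        rintro y ⟨h1, h2⟩
        rw [hic.isClosed.closure_eq] at h1
        obtain ⟨z, hz, rfl⟩ := h1
        by_cases hzA : z ∈ A
        · rw [← hAinv] at hzA
          exact hzA.2
        · refine absurd (mem_interior.2 ⟨g '' (topHull A \ A), image_mono sdiff_subset,
            H.isOpen_image _ (sdiff_subset.trans hHU) hHo, z, ⟨hz, hzA⟩, rfl⟩) h2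
      exact fun z hz => ⟨hHU hz, hsub ⟨z, hz, rfl⟩⟩
  have hfull : topHull A = A :=
    Subset.antisymm (hmax _ hHc hHK hHinv) (subset_topHull A)
  rw [← hfull]
  exact isConnected_compl_topHull hAc
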